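/- arXiv:2504.16095 — 2 statements merged into one kernel-verified Lean document; each statement's English description precedes it below -/
import Mathlib

section
/- Let E be a real inner product space and equip ℝ × E with the Minkowski pairing η((s,x),(t,y)) := -s*t + ⟪x,y⟫. Call (s,x) ∈ ℝ × E future-causal if s ≥ ‖x‖, and future-lightlike if s = ‖x‖ and s > 0. Let L ∈ ℝ × E be future-lightlike, let V ∈ ℝ × E be future-causal with V ≠ 0, and suppose there is s ∈ ℝ with η(L, V) • L = s • V. Then there exists c > 0 with V = c • L. -/
open scoped RealInnerProductSpace

/-- For the Minkowski pairing on `ℝ × E`: if `L` is future-lightlike, `V` is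
future-causal and nonzero, and `η(L,V) • L = s • V` for some real `s`, then
`V` is a positive multiple of `L`. -/
theorem stmt7 {E : Type*} [NormedAddCommGroup E] [InnerProductSpace ℝ E]
    (η : ℝ × E → ℝ × E → ℝ)
    (hη : ∀ v w : ℝ × E, η v w = -(v.1 * w.1) + ⟪v.2, w.2⟫)
    (L V : ℝ × E)
    (hL : L.1 = ‖L.2‖ ∧ 0 < L.1)      -- `L` is future-lightlike
    (hV : V.1 ≥ ‖V.2‖)                -- `V` is future-causal
    (hV0 : V ≠ 0)
    (h : ∃ s : ℝ, (η L V) • L = s • V) :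
    ∃ c : ℝ, 0 < c ∧ V = c • L := by
  obtain ⟨a, x⟩ := L
  obtain ⟨b, y⟩ := V
  obtain ⟨s, h⟩ := h
  obtain ⟨hL1, hL2⟩ := hL
  rw [hη] at h
  simp only [Prod.smul_mk, Prod.mk.injEq, smul_eq_mul] at h hL1 hL2 hV
  obtain ⟨h1, h2⟩ := h
  have hy := norm_nonneg y
  have hb : 0 < b := by
    rcases (hy.trans hV).lt_or_eq with hb | hb
    · exact hb
    · exfalso
      apply hV0
      have : y = 0 := norm_le_zero_iff.mp (by linarith)
      rw [this, ← hb]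
      rfl
  have key : a • y = b • x := by
    by_cases he : -(a * b) + ⟪x, y⟫ = 0
    · rw [← sub_eq_zero, ← norm_eq_zero]
      have e : ‖a • y - b • x‖ ^ 2 = a ^ 2 * (‖y‖ ^ 2 - b ^ 2) := by
        rw [norm_sub_sq_real, real_inner_smul_left, real_inner_smul_right, real_inner_comm,
          norm_smul, norm_smul, mul_pow, mul_pow, ← hL1, Real.norm_eq_abs, Real.norm_eq_abs,
          sq_abs, sq_abs]
        have : ⟪x, y⟫ = a * b := by linarith
        rw [this]
        ring
      have h3 : ‖y‖ ^ 2 - b ^ 2 ≤ 0 := by nlinarith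
      have h4 : ‖a • y - b • x‖ ^ 2 ≤ 0 := by
        rw [e]
        exact mul_nonpos_of_nonneg_of_nonpos (sq_nonneg a) h3
      exact pow_eq_zero_iff (two_ne_zero) |>.mp (le_antisymm h4 (sq_nonneg _))
    · have hs : s ≠ 0 := by
        rintro rfl
        rw [zero_mul] at h1
        exact (mul_ne_zero he hL2.ne') h1
      apply smul_right_injective E hs
      change s • a • y = s • b • x
      rw [smul_comm s a y, ← h2, smul_smul, smul_smul, ← h1, mul_comm]
  refine ⟨b / a, div_pos hb hL2, ?_⟩
  rw [Prod.smul_mk, Prod.mk.injEq]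
  refine ⟨by simp [hL2.ne'], ?_⟩
  rw [div_eq_inv_mul, mul_smul, ← key, inv_smul_smul₀ hL2.ne']
end

section
/- Let F be a real normed space, give ℝ × F the product norm, and let π : ℝ × F → ℝ × F be the continuous linear projection π(t,y) = (t,0). Let f₁, f₂ : ℝ × F → ℝ be differentiable at p = (0,0) with fderiv f₂ p (0,k) = 0 for all k ∈ F. For real numbers 0 ≤ s ≤ t ≤ 1 set f_A := (1-s)•f₁ + s•f₂, f_B := (1-t)•f₁ + t•f₂, and f₀ := f_B + f_A ∘ π - f_B ∘ π. Then ‖fderiv f₀ p‖ ≤ max (‖fderiv f₁ p‖) (‖fderiv f₂ p‖). -/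
/-- Derivative estimate for the interpolating function built from convex
combinations `f_A = (1-s)•f₁ + s•f₂` and `f_B = (1-t)•f₁ + t•f₂` with
`0 ≤ s ≤ t ≤ 1`: the function `f₀ = f_B + f_A ∘ π - f_B ∘ π` satisfies
`‖fderiv f₀ p‖ ≤ max ‖fderiv f₁ p‖ ‖fderiv f₂ p‖` at `p = (0,0)`, provided
`f₁, f₂` are differentiable at `p` and `fderiv f₂ p` vanishes on `{0} × F`. -/
theorem stmt9 {F : Type*} [NormedAddCommGroup F] [NormedSpace ℝ F]
    (π : (ℝ × F) →L[ℝ] ℝ × F) (hπ : ∀ q : ℝ × F, π q = (q.1, 0))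
    (f₁ f₂ : ℝ × F → ℝ) (p : ℝ × F) (hp : p = (0, 0))
    (hf₁ : DifferentiableAt ℝ f₁ p) (hf₂ : DifferentiableAt ℝ f₂ p)
    (hker : ∀ k : F, fderiv ℝ f₂ p (0, k) = 0)
    (s t : ℝ) (hs : 0 ≤ s) (hst : s ≤ t) (ht : t ≤ 1)
    (fA fB f₀ : ℝ × F → ℝ)
    (hfA : fA = (1 - s) • f₁ + s • f₂)
    (hfB : fB = (1 - t) • f₁ + t • f₂)
    (hf₀ : f₀ = fB + fA ∘ π - fB ∘ π) :
    ‖fderiv ℝ f₀ p‖ ≤ max ‖fderiv ℝ f₁ p‖ ‖fderiv ℝ f₂ p‖ := by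
  have hπp : π p = p := by rw [hπ, hp]
  have hA : HasFDerivAt fA ((1 - s) • fderiv ℝ f₁ p + s • fderiv ℝ f₂ p) p := by
    rw [hfA]
    exact (hf₁.hasFDerivAt.const_smul (1 - s)).add (hf₂.hasFDerivAt.const_smul s)
  have hB : HasFDerivAt fB ((1 - t) • fderiv ℝ f₁ p + t • fderiv ℝ f₂ p) p := by
    rw [hfB]
    exact (hf₁.hasFDerivAt.const_smul (1 - t)).add (hf₂.hasFDerivAt.const_smul t)
  have hA' := HasFDerivAt.comp p (hπp.symm ▸ hA : HasFDerivAt fA _ (π p)) π.hasFDerivAt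
  have hB' := HasFDerivAt.comp p (hπp.symm ▸ hB : HasFDerivAt fB _ (π p)) π.hasFDerivAt
  have h0 := (hB.add hA').sub hB'
  rw [← hf₀] at h0
  rw [h0.fderiv]
  simp only [hπp]
  set D₁ := fderiv ℝ f₁ p
  set D₂ := fderiv ℝ f₂ p
  obtain ⟨c, hc0, hc1, hc⟩ : ∃ c : ℝ, 0 ≤ c ∧ c ≤ 1 ∧ (1 - s) * c = 1 - t := by
    rcases eq_or_lt_of_le (hst.trans ht) with h | h
    · exact ⟨0, le_rfl, zero_le_one, by linarith⟩
    · have h1 : 0 < 1 - s := by linarith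
      refine ⟨(1 - t) / (1 - s), div_nonneg (by linarith) h1.le, ?_, ?_⟩
      · rw [div_le_one h1]; linarith
      · field_simp
  refine ContinuousLinearMap.opNorm_le_bound _ (le_max_of_le_left (norm_nonneg _)) ?_
  rintro ⟨x, y⟩
  have e1 : ∀ (D : ℝ × F →L[ℝ] ℝ) (k : ℝ), D (x, k • y) = D (x, 0) + k * D (0, y) := by
    intro D k
    rw [← smul_eq_mul, ← map_smul, ← map_add]
    simp
  have e2 : ∀ (D : ℝ × F →L[ℝ] ℝ), D (x, y) = D (x, 0) + D (0, y) := by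
    intro D
    rw [← map_add]
    simp
  have key : ((1 - t) • D₁ + t • D₂ + ((1 - s) • D₁ + s • D₂).comp π
      - ((1 - t) • D₁ + t • D₂).comp π) (x, y)
      = (1 - s) * D₁ (x, c • y) + s * D₂ (x, y) := by
    simp only [ContinuousLinearMap.sub_apply, ContinuousLinearMap.add_apply,
      ContinuousLinearMap.smul_apply, ContinuousLinearMap.comp_apply, hπ, smul_eq_mul]
    rw [e1 D₁ c, e2 D₁, e2 D₂, hker y]
    linear_combination (- D₁ (0, y)) * hc
  rw [key]
  have hn : ‖((x, c • y) : ℝ × F)‖ ≤ ‖((x, y) : ℝ × F)‖ := by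
    rw [Prod.norm_mk, Prod.norm_mk, norm_smul, Real.norm_of_nonneg hc0]
    exact max_le_max le_rfl (mul_le_of_le_one_left (norm_nonneg _) hc1)
  have b1 : ‖D₁ (x, c • y)‖ ≤ max ‖D₁‖ ‖D₂‖ * ‖((x, y) : ℝ × F)‖ :=
    (D₁.le_opNorm _).trans (mul_le_mul (le_max_left _ _) hn (norm_nonneg _)
      (le_max_of_le_left (norm_nonneg _)))
  have b2 : ‖D₂ (x, y)‖ ≤ max ‖D₁‖ ‖D₂‖ * ‖((x, y) : ℝ × F)‖ :=
    (D₂.le_opNorm _).trans (mul_le_mul_of_nonneg_right (le_max_right _ _) (norm_nonneg _))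
  have h1s : 0 ≤ 1 - s := by linarith
  refine (norm_add_le _ _).trans ?_
  rw [norm_mul, norm_mul, Real.norm_of_nonneg hs, Real.norm_of_nonneg h1s]
  have := mul_le_mul_of_nonneg_left b1 h1s
  have := mul_le_mul_of_nonneg_left b2 hs
  linarith
end
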